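/- For each permutation w of {1,…,a}, fix a reduced word for w, i.e., an expression w = s_{i_1}⋯s_{i_ℓ} as a product of adjacent transpositions s_i = (i, i+1) of minimal possible length ℓ = ℓ(w), and define ∂_w = ∂_{i_1} ∘ ⋯ ∘ ∂_{i_ℓ} (with ∂_e = id for the identity permutation). Then the operators ∂_w are linearly independent over the polynomial ring: if polynomials f_w ∈ ℤ[x_1,…,x_a] (for w ranging over all permutations of {1,…,a}) satisfy ∑_w f_w·∂_w = 0 as an operator on ℤ[x_1,…,x_a] (where f_w acts by multiplication), then f_w = 0 for every w. -/

import Mathlib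

/-! Linear independence of the operators `∂_w` over the polynomial ring.
Variables are indexed by `Fin a` (0-indexed); the adjacent transposition `s_i`
of the paper corresponds to `swapPerm a i` for `i : ℕ` with `i + 1 < a`. -/

open MvPolynomial

/-- The adjacent transposition `(i, i+1)` of `Fin a` (and the identity for an
out-of-range index). -/
noncomputable def swapPerm (a : ℕ) (i : ℕ) : Equiv.Perm (Fin a) :=
  if h : i + 1 < a then Equiv.swap ⟨i, by omega⟩ ⟨i + 1, h⟩ else 1

/-!
Write `sᵢ` for the `i`-th adjacent transposition acting on polynomials. Expanding
`∂ᵢ = (xᵢ - xᵢ₊₁)⁻¹ (1 - sᵢ)` along a reduced word of `w` and clearing denominators shows that a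
multiple of `∂_w` equals a multiple of `w` plus a combination of products of fewer than `ℓ(w)`
transpositions. The permutations are linearly independent operators by Dedekind's argument, and a
family that is triangular with respect to a linearly independent one is linearly independent.
All denominators and leading coefficients are non-zero-divisors, over every commutative
coefficient ring, so no field of fractions is needed.
-/

open Submodule
open scoped nonZeroDivisors

section LinearIndependence

variable {κ A V : Type*} [CommRing A] [AddCommGroup V] [Module A V]

theorem linearIndependent_of_smul_of_mem_nonZeroDivisors {u : κ → V} {d : κ → A}
    (hd : ∀ k, d k ∈ A⁰) (hdu : LinearIndependent A fun k => d k • u k) :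
    LinearIndependent A u := by
  classical
  rw [linearIndependent_iff'] at hdu ⊢
  intro t g hg k hk
  have hsum : ∑ j ∈ t, (g j * ∏ i ∈ t.erase j, d i) • d j • u j = 0 := by
    calc ∑ j ∈ t, (g j * ∏ i ∈ t.erase j, d i) • d j • u j
        = ∑ j ∈ t, (∏ i ∈ t, d i) • g j • u j := Finset.sum_congr rfl fun j hj => by
          rw [smul_smul, smul_smul, mul_assoc, Finset.prod_erase_mul t d hj, mul_comm]
      _ = 0 := by rw [← Finset.smul_sum, hg, smul_zero]
  exact (mul_right_mem_nonZeroDivisors_eq_zero_iff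
    (prod_mem fun i _ => hd i)).1 (hdu t _ hsum k hk)

theorem linearIndependent_of_triangular {α : Type*} [LinearOrder α] {b u : κ → V}
    (hb : LinearIndependent A b) (ℓ : κ → α) {c : κ → A} (hc : ∀ k, c k ∈ A⁰)
    (hu : ∀ k, u k - c k • b k ∈ span A (b '' {j | ℓ j < ℓ k})) : LinearIndependent A u := by
  classical
  rw [linearIndependent_iff]
  intro g hg
  by_contra hg0
  obtain ⟨k, hk, hmax⟩ := g.support.exists_max_image ℓ (Finsupp.support_nonempty_iff.2 hg0)
  have lower_le {j : κ} (hj : ℓ j ≤ ℓ k) :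
      span A (b '' {i | ℓ i < ℓ j}) ≤ span A (b '' (Set.univ \ {k})) := by
    refine span_mono (Set.image_mono fun i hi => ⟨trivial, ?_⟩)
    rintro rfl
    exact absurd hi hj.not_gt
  have mem_of_ne {j : κ} (hj : j ∈ g.support.erase k) :
      g j • u j ∈ span A (b '' (Set.univ \ {k})) := by
    obtain ⟨hjk, hjg⟩ := Finset.mem_erase.1 hj
    rw [← sub_add_cancel (u j) (c j • b j)]
    exact smul_mem _ _ (add_mem (lower_le (hmax j hjg) (hu j))
      (smul_mem _ _ (subset_span ⟨j, ⟨trivial, hjk⟩, rfl⟩)))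
  have leading_mem : (g k * c k) • b k ∈ span A (b '' (Set.univ \ {k})) := by
    have hsplit : (g k * c k) • b k =
        -(g k • (u k - c k • b k) + ∑ j ∈ g.support.erase k, g j • u j) := by
      rw [Finsupp.linearCombination_apply, Finsupp.sum, ← Finset.add_sum_erase _ _ hk] at hg
      rw [eq_neg_of_add_eq_zero_right hg, mul_smul, smul_sub]
      abel
    rw [hsplit]
    exact neg_mem (add_mem (smul_mem _ _ (lower_le le_rfl (hu k)))
      (sum_mem fun j hj => mem_of_ne hj))
  have hgc : g k * c k = 0 := linearIndependent_iff_eq_zero_of_smul_mem_span.1 hb k _ leading_mem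
  exact Finsupp.mem_support_iff.1 hk ((mul_right_mem_nonZeroDivisors_eq_zero_iff (hc k)).1 hgc)

/-- Over a domain this is Dedekind's theorem `linearIndependent_monoidHom`. -/
theorem linearIndependent_monoidHom_of_sub_mem_nonZeroDivisors {M : Type*} [MulOneClass M]
    {φ : κ → M →* A} (hφ : Pairwise fun j k => ∃ x, φ j x - φ k x ∈ A⁰) :
    LinearIndependent A fun k => (φ k : M → A) := by
  classical
  rw [linearIndependent_iff']
  intro t
  induction t using Finset.induction_on with
  | empty => simp
  | insert k t hkt ih =>
    intro g hg
    have hsum (x : M) : g k * φ k x + ∑ j ∈ t, g j * φ j x = 0 := by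
      simpa [Finset.sum_insert hkt] using congrFun hg x
    have hgt : ∀ j ∈ t, g j = 0 := by
      intro j hj
      obtain ⟨x, hx⟩ := hφ (ne_of_mem_of_not_mem hj hkt)
      have hcomb : ∑ i ∈ t, (g i * (φ i x - φ k x)) • (φ i : M → A) = 0 := by
        funext y
        have hexpand : ∑ i ∈ t, g i * (φ i x - φ k x) * φ i y =
            ∑ i ∈ t, g i * φ i (x * y) - φ k x * ∑ i ∈ t, g i * φ i y := by
          rw [Finset.mul_sum, ← Finset.sum_sub_distrib]
          refine Finset.sum_congr rfl fun i _ => ?_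
          rw [map_mul]
          ring
        have hxy := hsum (x * y)
        rw [map_mul] at hxy
        simp only [Finset.sum_apply, Pi.smul_apply, smul_eq_mul, Pi.zero_apply]
        linear_combination hexpand + hxy - φ k x * hsum y
      exact (mul_right_mem_nonZeroDivisors_eq_zero_iff hx).1 (ih _ hcomb j hj)
    have hgk : g k = 0 := by
      have h1 := hsum 1
      rwa [Finset.sum_eq_zero fun j hj => by rw [hgt j hj, zero_mul], map_one, mul_one,
        add_zero] at h1
    exact (Finset.forall_mem_insert _ _ _).2 ⟨hgk, hgt⟩

end LinearIndependence

section WordOperators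

variable {ι R A G : Type*} [CommRing A] [Monoid G]

/-- The `A`-linear combinations, as functions `A → A`, of the automorphisms `s i₁ ⋯ s iₘ` of `A`
with `m < n`, for generators `s i` acting through `φ`. These are the lower order terms of a
composite of `n` divided differences. -/
def shortWordSpan (φ : G →* RingAut A) (s : ι → G) (n : ℕ) : Submodule A (A → A) :=
  span A ((fun l : List ι => ⇑(φ (l.map s).prod)) '' {l | l.length < n})

variable {φ : G →* RingAut A} {s : ι → G}

theorem coe_map_cons_prod (i : ι) (l : List ι) :
    ⇑(φ ((i :: l).map s).prod) = φ (s i) ∘ φ (l.map s).prod := by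
  rw [List.map_cons, List.prod_cons, map_mul]
  rfl

theorem coe_prod_mem_shortWordSpan {l : List ι} {n : ℕ} (hl : l.length < n) :
    ⇑(φ (l.map s).prod) ∈ shortWordSpan φ s n :=
  subset_span ⟨l, hl, rfl⟩

theorem shortWordSpan_mono : Monotone (shortWordSpan φ s) := fun _ _ hmn =>
  span_mono (Set.image_mono fun _ hl => lt_of_lt_of_le hl hmn)

theorem comp_mem_shortWordSpan_succ (i : ι) {n : ℕ} {T : A → A} (hT : T ∈ shortWordSpan φ s n) :
    φ (s i) ∘ T ∈ shortWordSpan φ s (n + 1) := by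
  induction hT using span_induction with
  | mem T hT =>
    obtain ⟨l, hl, rfl⟩ := hT
    rw [← coe_map_cons_prod]
    exact coe_prod_mem_shortWordSpan (Nat.succ_lt_succ hl)
  | zero =>
    convert zero_mem (shortWordSpan φ s (n + 1)) using 1
    exact funext fun _ => map_zero (φ (s i))
  | add T U _ _ hT hU =>
    convert add_mem hT hU using 1
    exact funext fun p => map_add (φ (s i)) (T p) (U p)
  | smul r T _ hT =>
    convert smul_mem _ (φ (s i) r) hT using 1
    exact funext fun p => map_mul (φ (s i)) r (T p)

theorem ringAut_apply_mem_nonZeroDivisors (σ : RingAut A) {x : A} (hx : x ∈ A⁰) : σ x ∈ A⁰ :=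
  mem_nonZeroDivisors_of_injective (f := σ.symm) σ.symm.injective (by rwa [σ.symm_apply_apply])

variable [Semiring R] [Module R A] {α : ι → A} {D : ι → Module.End R A}

theorem exists_smul_prod_sub_smul_mem_shortWordSpan (hα : ∀ i, α i ∈ A⁰)
    (hD : ∀ i p, α i * D i p = p - φ (s i) p) (l : List ι) :
    ∃ d ∈ A⁰, ∃ c ∈ A⁰,
      d • ⇑(l.map D).prod - c • ⇑(φ (l.map s).prod) ∈ shortWordSpan φ s l.length := by
  induction l with
  | nil =>
    refine ⟨1, one_mem _, 1, one_mem _, ?_⟩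
    convert zero_mem (shortWordSpan φ s _) using 1
    funext p
    simp
  | cons i l ih =>
    obtain ⟨d, hd, c, hc, hmem⟩ := ih
    set T : A → A := ⇑(l.map D).prod
    set π : A → A := ⇑(φ (l.map s).prod)
    let r : A → A := d • T - c • π
    let σ : RingAut A := φ (s i)
    have hσ {x : A} (hx : x ∈ A⁰) : σ x ∈ A⁰ := ringAut_apply_mem_nonZeroDivisors σ hx
    refine ⟨α i * (σ d * d), mul_mem (hα i) (mul_mem (hσ hd) hd), -1 * (d * σ c),
      mul_mem isUnit_one.neg.mem_nonZeroDivisors (mul_mem hd (hσ hc)), ?_⟩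
    have hexpand : (α i * (σ d * d)) • ⇑((i :: l).map D).prod
        - (-1 * (d * σ c)) • ⇑(φ ((i :: l).map s).prod) =
          (σ d * c) • π + σ d • r - d • (σ ∘ r) := by
      funext p
      have hDT : ((i :: l).map D).prod p = D i (T p) := by
        rw [List.map_cons, List.prod_cons, Module.End.mul_apply]
      simp only [coe_map_cons_prod, r, Pi.add_apply, Pi.sub_apply, Pi.smul_apply, smul_eq_mul,
        Function.comp_apply, map_sub, map_mul, hDT]
      linear_combination σ d * d * hD i (T p)
    rw [hexpand]
    exact sub_mem (add_mem (smul_mem _ _ (coe_prod_mem_shortWordSpan (Nat.lt_succ_self _)))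
      (smul_mem _ _ (shortWordSpan_mono (Nat.le_succ _) hmem)))
      (smul_mem _ _ (comp_mem_shortWordSpan_succ i hmem))

theorem linearIndependent_prod_of_minimal_words (hα : ∀ i, α i ∈ A⁰)
    (hD : ∀ i p, α i * D i p = p - φ (s i) p)
    (hφ : Pairwise fun v w => ∃ x, φ v x - φ w x ∈ A⁰) {L : G → List ι}
    (hLprod : ∀ w, ((L w).map s).prod = w)
    (hLmin : ∀ l : List ι, (L (l.map s).prod).length ≤ l.length) :
    LinearIndependent A fun w => ⇑((L w).map D).prod := by
  have hrange (w : G) : shortWordSpan φ s (L w).length ≤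
      span A ((fun v => ⇑(φ v)) '' {v | (L v).length < (L w).length}) := by
    refine span_mono ?_
    rintro _ ⟨l, hl, rfl⟩
    exact ⟨_, (hLmin l).trans_lt hl, rfl⟩
  have hφ_indep : LinearIndependent A fun v => ⇑(φ v) :=
    linearIndependent_monoidHom_of_sub_mem_nonZeroDivisors (φ := fun v => (φ v : A →* A)) hφ
  choose d hd c hc hmem using fun w =>
    exists_smul_prod_sub_smul_mem_shortWordSpan hα hD (L w)
  simp only [hLprod] at hmem
  exact linearIndependent_of_smul_of_mem_nonZeroDivisors hd <|
    linearIndependent_of_triangular hφ_indep (fun w => (L w).length) hc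
      fun w => hrange w (hmem w)

end WordOperators

section Polynomial

variable {σ R : Type*}

section CommSemiring

variable [CommSemiring R]

/-- The action of permutations of the variables on polynomials, `X j ↦ X (w j)`. -/
noncomputable def renameAut (σ R : Type*) [CommSemiring R] :
    Equiv.Perm σ →* RingAut (MvPolynomial σ R) where
  toFun w := (renameEquiv R w).toRingEquiv
  map_one' := RingEquiv.ext fun p => rename_id_apply p
  map_mul' v w := RingEquiv.ext fun p => (rename_rename w v p).symm

theorem renameAut_apply (w : Equiv.Perm σ) (p : MvPolynomial σ R) :
    renameAut σ R w p = rename w p := rfl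

open Classical in
/-- The elementary substitution `X i ↦ X i + ε` fixing all other variables. It is used to move the
linear form `X i - X j` to the variable `X i`. -/
noncomputable def shear (i : σ) (ε : MvPolynomial σ R) : MvPolynomial σ R →ₐ[R] MvPolynomial σ R :=
  aeval (Function.update X i (X i + ε))

theorem shear_X_self (i : σ) (ε : MvPolynomial σ R) : shear i ε (X i) = X i + ε := by
  simp [shear]

theorem shear_X_of_ne {i k : σ} (hk : k ≠ i) (ε : MvPolynomial σ R) : shear i ε (X k) = X k := by
  simp [shear, hk]

end CommSemiring

variable [CommRing R]

theorem shear_X_injective {i j : σ} (hij : i ≠ j) :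
    Function.Injective (shear i (X j : MvPolynomial σ R)) := by
  have hinv : (shear i (-X j)).comp (shear i (X j)) = AlgHom.id R (MvPolynomial σ R) := by
    refine algHom_ext fun k => ?_
    obtain rfl | hk := eq_or_ne k i
    · simp [shear_X_self, shear_X_of_ne hij.symm]
    · simp [shear_X_of_ne hk]
  exact Function.LeftInverse.injective (g := shear i (-X j)) fun p => by
    rw [← AlgHom.comp_apply, hinv, AlgHom.id_apply]

theorem X_sub_X_mem_nonZeroDivisors {i j : σ} (hij : i ≠ j) :
    (X i - X j : MvPolynomial σ R) ∈ (MvPolynomial σ R)⁰ := by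
  refine mem_nonZeroDivisors_of_injective (shear_X_injective hij) ?_
  rw [map_sub, shear_X_self, shear_X_of_ne hij.symm, add_sub_cancel_right]
  exact isRegular_X.mem_nonZeroDivisors

theorem pairwise_exists_renameAut_sub_mem_nonZeroDivisors :
    Pairwise fun v w : Equiv.Perm σ =>
      ∃ p, renameAut σ R v p - renameAut σ R w p ∈ (MvPolynomial σ R)⁰ := by
  intro v w hvw
  obtain ⟨j, hj⟩ := not_forall.1 (mt Equiv.ext hvw)
  refine ⟨X j, ?_⟩
  rw [renameAut_apply, renameAut_apply, rename_X, rename_X]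
  exact X_sub_X_mem_nonZeroDivisors hj

end Polynomial

theorem stmt8_general {R : Type*} [CommRing R] (a : ℕ)
    (D : ℕ → Module.End R (MvPolynomial (Fin a) R))
    (hD : ∀ (i : ℕ) (hi : i + 1 < a) (f : MvPolynomial (Fin a) R),
      (X (⟨i, by omega⟩ : Fin a) - X (⟨i + 1, hi⟩ : Fin a)) * D i f =
        f - rename (Equiv.swap (⟨i, by omega⟩ : Fin a) (⟨i + 1, hi⟩ : Fin a)) f)
    (L : Equiv.Perm (Fin a) → List ℕ)
    (hLval : ∀ w, ∀ i ∈ L w, i + 1 < a)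
    (hLprod : ∀ w, ((L w).map (swapPerm a)).prod = w)
    (hLmin : ∀ w, ∀ l : List ℕ, (∀ i ∈ l, i + 1 < a) →
      (l.map (swapPerm a)).prod = w → (L w).length ≤ l.length) :
    LinearIndependent (MvPolynomial (Fin a) R) fun w => ⇑((L w).map D).prod := by
  lift L to Equiv.Perm (Fin a) → List {i : ℕ // i + 1 < a} using hLval
  simp only [List.map_map] at hLprod ⊢
  refine linearIndependent_prod_of_minimal_words (φ := renameAut (Fin a) R)
    (s := swapPerm a ∘ Subtype.val) (α := fun i => X ⟨i, by omega⟩ - X ⟨i + 1, i.2⟩)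
    (fun i => X_sub_X_mem_nonZeroDivisors (Fin.ne_of_val_ne (Nat.succ_ne_self i).symm)) ?_
    pairwise_exists_renameAut_sub_mem_nonZeroDivisors hLprod ?_
  · rintro ⟨i, hi⟩ p
    simpa only [renameAut_apply, Function.comp_apply, swapPerm, dif_pos hi] using hD i hi p
  · intro l
    simpa only [List.length_map, List.map_map] using
      hLmin _ (l.map Subtype.val) (List.forall_mem_map.2 fun i _ => i.2) rfl

theorem stmt8 (a : ℕ) (ha : 1 ≤ a)
    -- a family of operators satisfying the divided-difference property
    (D : ℕ → Module.End ℤ (MvPolynomial (Fin a) ℤ))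
    (hD : ∀ (i : ℕ) (hi : i + 1 < a) (f : MvPolynomial (Fin a) ℤ),
      (X (⟨i, by omega⟩ : Fin a) - X (⟨i + 1, hi⟩ : Fin a)) * D i f =
        f - rename (Equiv.swap (⟨i, by omega⟩ : Fin a) (⟨i + 1, hi⟩ : Fin a)) f)
    -- a choice of reduced word for each permutation
    (L : Equiv.Perm (Fin a) → List ℕ)
    (hLval : ∀ w, ∀ i ∈ L w, i + 1 < a)
    (hLprod : ∀ w, ((L w).map (swapPerm a)).prod = w)
    (hLmin : ∀ w, ∀ l : List ℕ, (∀ i ∈ l, i + 1 < a) →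
      (l.map (swapPerm a)).prod = w → (L w).length ≤ l.length)
    -- a (polynomial) linear combination of the operators ∂_w that vanishes
    (f : Equiv.Perm (Fin a) → MvPolynomial (Fin a) ℤ)
    (hf : ∑ w : Equiv.Perm (Fin a),
      (LinearMap.mulLeft ℤ (f w) : Module.End ℤ (MvPolynomial (Fin a) ℤ)) *
        ((L w).map D).prod = 0) :
    ∀ w, f w = 0 := Fintype.linearIndependent_iff.1 (stmt8_general a D hD L hLval hLprod hLmin) f <|
    funext fun p => by simpa using LinearMap.congr_fun hf p
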